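/- There exists an open set Ω ⊆ ℝ, a countable union of disjoint open intervals accumulating at 0 (so that 0 ∈ ∂Ω), such that |Ω ∩ (−r,r)|/(2r) → 0 as r → 0⁺; and for any such Ω, the function u(t) := ∫₀^t ∫₀^s χ_Ω(τ) dτ ds satisfies: u is C^{1,1} on ℝ, u''(t) = χ_Ω(t) for a.e. t, u'' = χ_{{u'' ≠ 0}} a.e., and u(r) = o(r²) as r → 0. In particular, quadratic non-degeneracy at the free boundary point 0 fails for the one-dimensional problem u'' = χ_{{u''≠0}}. -/

import Mathlib

open MeasureTheory Metric Set Filter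
open scoped Topology ENNReal Asymptotics

noncomputable section

/-- `Ω ⊆ ℝ` is a countable union of pairwise disjoint open intervals. -/
def IsUnionOfDisjointIntervals (Ω : Set ℝ) : Prop :=
  ∃ I : ℕ → Set ℝ, (∀ j, ∃ a b : ℝ, a < b ∧ I j = Set.Ioo a b) ∧
    Pairwise (Function.onFun Disjoint I) ∧ Ω = ⋃ j, I j

/-- The density of `Ω` in `(-r, r)` tends to `0` as `r → 0⁺`. -/
def VanishingDensityAtZero (Ω : Set ℝ) : Prop :=
  Tendsto (fun r : ℝ => (volume (Ω ∩ Set.Ioo (-r) r)).toReal / (2 * r)) (𝓝[>] 0) (𝓝 0)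

/-!
For the first half, take intervals `(x j, x j + x j ^ 3)` with `∑ x j < ∞`: the ones which meet
`(-r, r)` have `x j < r`, so together they have measure at most `r ^ 2 * ∑ x j = o(r)`.

For the second half, `u'` is the primitive of the bounded function `χ_Ω`, hence Lipschitz and, by
Lebesgue differentiation, a.e. differentiable with derivative `χ_Ω`. On `[-|t|, |t|]` it is bounded
by `|Ω ∩ (-|t|, |t|)| = o(|t|)`, and integrating once more gives `u t = o(t ^ 2)`.
-/

section SparseIntervals

/-- The open set `Ω` of the construction: intervals starting at the points `x j`, so short compared
with `x j` that they have density zero at `0` as soon as `x` is summable. -/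
def cubicIntervals (x : ℕ → ℝ) : Set ℝ :=
  ⋃ j, Ioo (x j) (x j + x j ^ 3)

variable {x : ℕ → ℝ}

lemma isOpen_cubicIntervals : IsOpen (cubicIntervals x) :=
  isOpen_iUnion fun _ => isOpen_Ioo

lemma isUnionOfDisjointIntervals_cubicIntervals (hx : ∀ j, 0 < x j)
    (hgap : ∀ j, x (j + 1) + x (j + 1) ^ 3 ≤ x j) :
    IsUnionOfDisjointIntervals (cubicIntervals x) := by
  have hlt (j : ℕ) : x j < x j + x j ^ 3 := lt_add_of_pos_right _ (pow_pos (hx j) 3)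
  refine ⟨_, fun j => ⟨_, _, hlt j, rfl⟩, (pairwise_disjoint_on _).2 fun i j hij => ?_, rfl⟩
  have hanti : Antitone x := antitone_nat_of_succ_le fun j => (hlt (j + 1)).le.trans (hgap j)
  obtain ⟨k, rfl⟩ := Nat.exists_eq_add_of_lt hij
  have hle : x (i + k + 1) + x (i + k + 1) ^ 3 ≤ x i :=
    (hgap (i + k)).trans (hanti (Nat.le_add_right i k))
  exact disjoint_left.2 fun y hyi hyj => (hyi.1.trans hyj.2).not_ge hle

lemma zero_mem_frontier_cubicIntervals (hx : ∀ j, 0 < x j) (hlim : Tendsto x atTop (𝓝 0)) :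
    0 ∈ frontier (cubicIntervals x) := by
  rw [isOpen_cubicIntervals.frontier_eq]
  constructor
  · have hmid : Tendsto (fun j => x j + x j ^ 3 / 2) atTop (𝓝 0) := by
      simpa using hlim.add ((hlim.pow 3).div_const 2)
    refine mem_closure_of_tendsto hmid (Eventually.of_forall fun j => mem_iUnion.2 ⟨j, ?_⟩)
    have := pow_pos (hx j) 3
    constructor <;> linarith
  · intro h
    obtain ⟨j, hj, -⟩ := mem_iUnion.1 h
    exact hj.not_gt (hx j)

lemma volume_Ioo_add_cube_inter_Iio_le {a : ℝ} (ha : 0 ≤ a) (r : ℝ) :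
    volume (Ioo a (a + a ^ 3) ∩ Iio r) ≤ ENNReal.ofReal (r ^ 2 * a) := by
  rcases le_or_gt r a with hra | har
  · have hempty : Ioo a (a + a ^ 3) ∩ Iio r = ∅ :=
      (disjoint_left.2 fun y hy hyr => (hy.1.trans hyr).not_ge hra).inter_eq
    simp [hempty]
  · calc volume (Ioo a (a + a ^ 3) ∩ Iio r)
        ≤ volume (Ioo a (a + a ^ 3)) := measure_mono inter_subset_left
      _ = ENNReal.ofReal (a ^ 2 * a) := by rw [Real.volume_Ioo]; ring_nf
      _ ≤ ENNReal.ofReal (r ^ 2 * a) := by gcongr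

lemma volume_cubicIntervals_inter_Iio_le (hx : ∀ j, 0 ≤ x j) (hsum : Summable x) (r : ℝ) :
    volume (cubicIntervals x ∩ Iio r) ≤ ENNReal.ofReal (r ^ 2 * ∑' j, x j) :=
  calc volume (cubicIntervals x ∩ Iio r)
      = volume (⋃ j, Ioo (x j) (x j + x j ^ 3) ∩ Iio r) := by rw [cubicIntervals, iUnion_inter]
    _ ≤ ∑' j, volume (Ioo (x j) (x j + x j ^ 3) ∩ Iio r) := measure_iUnion_le _
    _ ≤ ∑' j, ENNReal.ofReal (r ^ 2 * x j) :=
        ENNReal.tsum_le_tsum fun j => volume_Ioo_add_cube_inter_Iio_le (hx j) r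
    _ = ENNReal.ofReal (r ^ 2 * ∑' j, x j) := by
        rw [← tsum_mul_left, ENNReal.ofReal_tsum_of_nonneg
          (fun j => mul_nonneg (sq_nonneg r) (hx j)) (hsum.mul_left _)]

lemma vanishingDensityAtZero_iff_isLittleO {Ω : Set ℝ} :
    VanishingDensityAtZero Ω ↔
      (fun r => volume.real (Ω ∩ Ioo (-r) r)) =o[𝓝[>] 0] fun r => r := by
  have hne : ∀ᶠ r : ℝ in 𝓝[>] 0, 2 * r = 0 → volume.real (Ω ∩ Ioo (-r) r) = 0 := by
    filter_upwards [self_mem_nhdsWithin] with r (hr : 0 < r) h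
    linarith
  rw [← Asymptotics.isLittleO_const_mul_right_iff (two_ne_zero' ℝ),
    Asymptotics.isLittleO_iff_tendsto' hne]
  rfl

lemma vanishingDensityAtZero_cubicIntervals (hx : ∀ j, 0 ≤ x j) (hsum : Summable x) :
    VanishingDensityAtZero (cubicIntervals x) := by
  have hbound (r : ℝ) : volume.real (cubicIntervals x ∩ Ioo (-r) r) ≤ (∑' j, x j) * r ^ 2 := by
    refine ENNReal.toReal_le_of_le_ofReal (mul_nonneg (tsum_nonneg hx) (sq_nonneg r)) ?_
    rw [mul_comm]
    exact (measure_mono (inter_subset_inter_right _ Ioo_subset_Iio_self)).trans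
      (volume_cubicIntervals_inter_Iio_le hx hsum r)
  have hbigO : (fun r => volume.real (cubicIntervals x ∩ Ioo (-r) r)) =O[𝓝[>] 0]
      fun r => r ^ 2 :=
    .of_bound (∑' j, x j) (.of_forall fun r => by
      simpa [abs_of_nonneg measureReal_nonneg] using hbound r)
  exact vanishingDensityAtZero_iff_isLittleO.2 <| hbigO.trans_isLittleO <|
    (Asymptotics.isLittleO_pow_id one_lt_two).mono nhdsWithin_le_nhds

lemma exists_isUnionOfDisjointIntervals_vanishingDensityAtZero :
    ∃ Ω : Set ℝ, IsOpen Ω ∧ IsUnionOfDisjointIntervals Ω ∧ 0 ∈ frontier Ω ∧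
      VanishingDensityAtZero Ω := by
  have hpos (j : ℕ) : (0 : ℝ) < (1 / 2) ^ j := by positivity
  have hgap (j : ℕ) : ((1 / 2) ^ (j + 1) + ((1 / 2) ^ (j + 1)) ^ 3 : ℝ) ≤ (1 / 2) ^ j := by
    have hcube : (((1 / 2) ^ (j + 1)) ^ 3 : ℝ) ≤ (1 / 2) ^ (j + 1) :=
      pow_le_of_le_one (hpos _).le (pow_le_one₀ (by norm_num) (by norm_num)) three_ne_zero
    linarith [pow_succ (1 / 2 : ℝ) j]
  exact ⟨cubicIntervals fun j => (1 / 2) ^ j, isOpen_cubicIntervals,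
    isUnionOfDisjointIntervals_cubicIntervals hpos hgap,
    zero_mem_frontier_cubicIntervals hpos summable_geometric_two.tendsto_atTop_zero,
    vanishingDensityAtZero_cubicIntervals (fun j => (hpos j).le) summable_geometric_two⟩

end SparseIntervals

section DoublePrimitive

variable {E : Type*} [NormedAddCommGroup E] {f : ℝ → E}

lemma intervalIntegrable_of_locallyIntegrable {μ : Measure ℝ} (hf : LocallyIntegrable f μ)
    (a b : ℝ) : IntervalIntegrable f μ a b :=
  (hf.integrableOn_isCompact isCompact_uIcc).intervalIntegrable

variable [NormedSpace ℝ E]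

/-- The solution `u` of `u'' = f` with `u a = 0` and `u' a = 0`. -/
def doublePrimitive (f : ℝ → E) (a t : ℝ) : E :=
  ∫ s in a..t, ∫ τ in a..s, f τ

lemma lipschitzWith_primitive {C : NNReal} (hf : LocallyIntegrable f) (hC : ∀ x, ‖f x‖ ≤ C)
    (a : ℝ) : LipschitzWith C fun t => ∫ s in a..t, f s :=
  .of_dist_le_mul fun t t' => by
    rw [dist_eq_norm, Real.dist_eq, intervalIntegral.integral_interval_sub_left
      (intervalIntegrable_of_locallyIntegrable hf _ _)
      (intervalIntegrable_of_locallyIntegrable hf _ _)]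
    exact intervalIntegral.norm_integral_le_of_norm_le_const fun x _ => hC x

section Complete

variable [CompleteSpace E]

lemma hasDerivAt_doublePrimitive (hf : LocallyIntegrable f) (a t : ℝ) :
    HasDerivAt (doublePrimitive f a) (∫ τ in a..t, f τ) t :=
  ((intervalIntegral.continuous_primitive (intervalIntegrable_of_locallyIntegrable hf) a)
    |>.integral_hasStrictDerivAt a t).hasDerivAt

lemma deriv_doublePrimitive (hf : LocallyIntegrable f) (a : ℝ) :
    deriv (doublePrimitive f a) = fun t => ∫ τ in a..t, f τ :=
  funext fun t => (hasDerivAt_doublePrimitive hf a t).deriv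

lemma deriv_deriv_doublePrimitive_ae_eq (hf : LocallyIntegrable f) (a : ℝ) :
    deriv (deriv (doublePrimitive f a)) =ᵐ[volume] f := by
  rw [deriv_doublePrimitive hf]
  filter_upwards [LocallyIntegrable.ae_hasDerivAt_integral hf] with t ht using (ht a).deriv

end Complete

lemma norm_integral_le_setIntegral_ball (hf : LocallyIntegrable f) {a s r : ℝ}
    (hs : |s - a| ≤ r) : ‖∫ τ in a..s, f τ‖ ≤ ∫ τ in ball a r, ‖f τ‖ := by
  have hsub : uIoc a s ⊆ closedBall a r := fun τ hτ =>
    (abs_sub_left_of_mem_uIcc (uIoc_subset_uIcc hτ)).trans hs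
  have hae : closedBall a r =ᵐ[volume] ball a r := by
    simpa only [Real.closedBall_eq_Icc, Real.ball_eq_Ioo] using Ioo_ae_eq_Icc.symm
  calc ‖∫ τ in a..s, f τ‖
      ≤ ∫ τ in uIoc a s, ‖f τ‖ := intervalIntegral.norm_integral_le_integral_norm_uIoc
    _ ≤ ∫ τ in closedBall a r, ‖f τ‖ :=
        setIntegral_mono_set (hf.integrableOn_isCompact (isCompact_closedBall a r)).norm
          (.of_forall fun _ => norm_nonneg _) hsub.eventuallyLE
    _ = ∫ τ in ball a r, ‖f τ‖ := setIntegral_congr_set hae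

lemma norm_doublePrimitive_le (hf : LocallyIntegrable f) (a t : ℝ) :
    ‖doublePrimitive f a t‖ ≤ (∫ τ in ball a |t - a|, ‖f τ‖) * |t - a| :=
  intervalIntegral.norm_integral_le_of_norm_le_const fun _ hs =>
    norm_integral_le_setIntegral_ball hf (abs_sub_left_of_mem_uIcc (uIoc_subset_uIcc hs))

lemma doublePrimitive_isLittleO_sq (hf : LocallyIntegrable f) {a : ℝ}
    (hmean : (fun r => ∫ τ in ball a r, ‖f τ‖) =o[𝓝[>] 0] fun r => r) :
    doublePrimitive f a =o[𝓝 a] fun t => (t - a) ^ 2 := by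
  have hball : (fun t => ∫ τ in ball a |t - a|, ‖f τ‖) =o[𝓝[≠] a] fun t => |t - a| :=
    hmean.comp_tendsto (tendsto_norm_sub_self_nhdsNE a)
  have hprod : (fun t => (∫ τ in ball a |t - a|, ‖f τ‖) * |t - a|) =o[𝓝[≠] a]
      fun t => (t - a) ^ 2 := by
    simpa only [← sq, sq_abs] using
      hball.mul_isBigO (Asymptotics.isBigO_refl (fun t => |t - a|) _)
  have hpunctured : doublePrimitive f a =o[𝓝[≠] a] fun t => (t - a) ^ 2 :=
    (Asymptotics.isBigO_of_le' (c := 1) _ fun t => by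
      simpa using (norm_doublePrimitive_le hf a t).trans (le_abs_self _)).trans_isLittleO hprod
  simpa using hpunctured.insert intervalIntegral.integral_same

end DoublePrimitive

lemma setIntegral_norm_indicator_const {α E : Type*} [MeasurableSpace α] [NormedAddCommGroup E]
    {μ : Measure α} {s : Set α} (hs : MeasurableSet s) (t : Set α) (c : E) :
    ∫ x in t, ‖s.indicator (fun _ => c) x‖ ∂μ = μ.real (s ∩ t) * ‖c‖ := by
  simp [norm_indicator_eq_indicator_norm, setIntegral_indicator hs, inter_comm]

lemma eventuallyEq_indicator_support {α M : Type*} [Zero M] {l : Filter α} {s : Set α} {g : α → M}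
    {c : M} (h : g =ᶠ[l] s.indicator fun _ => c) :
    g =ᶠ[l] (Function.support g).indicator fun _ => c := by
  filter_upwards [h] with x hx
  by_cases hgx : g x = 0
  · simp [hgx]
  · have hxs : x ∈ s := mem_of_indicator_ne_zero (hx ▸ hgx)
    simp [Function.mem_support.2 hgx, hx, hxs]

lemma locallyIntegrable_indicator_one {Ω : Set ℝ} (hΩ : MeasurableSet Ω) :
    LocallyIntegrable (Ω.indicator fun _ => (1 : ℝ)) :=
  (locallyIntegrable_const 1).indicator hΩ

lemma doublePrimitive_indicator_isLittleO_sq {Ω : Set ℝ} (hΩ : MeasurableSet Ω)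
    (hd : VanishingDensityAtZero Ω) :
    doublePrimitive (Ω.indicator fun _ => (1 : ℝ)) 0 =o[𝓝 0] fun t => t ^ 2 := by
  have hmean := vanishingDensityAtZero_iff_isLittleO.1 hd
  simpa using doublePrimitive_isLittleO_sq (a := 0) (locallyIntegrable_indicator_one hΩ)
    (by simpa only [setIntegral_norm_indicator_const hΩ, Real.ball_zero_eq_Ioo, norm_one, mul_one]
      using hmean)

section Nondegeneracy

variable {V E : Type*} [SeminormedAddCommGroup V] [SeminormedAddCommGroup E] {u : V → E}

lemma eventually_forall_closedBall_norm_lt_of_isLittleO_pow {a : V} {n : ℕ}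
    (hu : u =o[𝓝 a] fun x => ‖x - a‖ ^ n) {c : ℝ} (hc : 0 < c) :
    ∀ᶠ r in 𝓝[>] (0 : ℝ), ∀ x ∈ closedBall a r, ‖u x‖ < c * r ^ n := by
  obtain ⟨δ, hδ, hball⟩ := Metric.eventually_nhds_iff.1 (hu.bound (half_pos hc))
  filter_upwards [Ioo_mem_nhdsGT hδ] with r hr x hx
  have hxr : ‖x - a‖ ≤ r := by rwa [← dist_eq_norm]
  calc ‖u x‖ ≤ c / 2 * ‖x - a‖ ^ n := by simpa using hball (lt_of_le_of_lt hx hr.2)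
    _ ≤ c / 2 * r ^ n := by gcongr
    _ < c * r ^ n := by gcongr; exacts [pow_pos hr.1 n, half_lt_self hc]

lemma not_exists_forall_exists_closedBall_le_of_isLittleO_pow {a : V} {n : ℕ}
    (hu : u =o[𝓝 a] fun x => ‖x - a‖ ^ n) :
    ¬ ∃ c : ℝ, 0 < c ∧ ∃ r₀ : ℝ, 0 < r₀ ∧
      ∀ r : ℝ, 0 < r → r < r₀ → ∃ x ∈ closedBall a r, c * r ^ n ≤ ‖u x‖ := by
  rintro ⟨c, hc, r₀, hr₀, hgrow⟩
  obtain ⟨r, hsmall, hr, hrr₀⟩ :=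
    ((eventually_forall_closedBall_norm_lt_of_isLittleO_pow hu hc).and (Ioo_mem_nhdsGT hr₀)).exists
  obtain ⟨x, hx, hle⟩ := hgrow r hr hrr₀
  exact (hsmall x hx).not_ge hle

end Nondegeneracy

theorem one_dim_nondegeneracy_fails_general :
    (∃ Ω : Set ℝ, IsOpen Ω ∧ IsUnionOfDisjointIntervals Ω ∧ 0 ∈ frontier Ω ∧
      VanishingDensityAtZero Ω) ∧
    ∀ Ω : Set ℝ, MeasurableSet Ω → VanishingDensityAtZero Ω →
      ∀ u : ℝ → ℝ,
        (u = fun t => ∫ s in (0:ℝ)..t, ∫ τ in (0:ℝ)..s, Ω.indicator (fun _ => (1:ℝ)) τ) →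
        Differentiable ℝ u ∧
        LipschitzWith 1 (deriv u) ∧
        (∀ᵐ t : ℝ, deriv (deriv u) t = Ω.indicator (fun _ => (1:ℝ)) t) ∧
        (∀ᵐ t : ℝ, deriv (deriv u) t =
          Set.indicator {s : ℝ | deriv (deriv u) s ≠ 0} (fun _ => (1:ℝ)) t) ∧
        (u =o[𝓝 0] fun r : ℝ => r ^ 2) ∧
        ¬ ∃ c : ℝ, 0 < c ∧ ∃ r0 : ℝ, 0 < r0 ∧
            ∀ r : ℝ, 0 < r → r < r0 → ∃ t ∈ Set.Icc (-r) r, c * r ^ 2 ≤ |u t| := by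
  refine ⟨exists_isUnionOfDisjointIntervals_vanishingDensityAtZero, fun Ω hΩ hd u hu => ?_⟩
  have hloc : LocallyIntegrable (Ω.indicator fun _ => (1 : ℝ)) :=
    locallyIntegrable_indicator_one hΩ
  have hle (t : ℝ) : ‖Ω.indicator (fun _ => (1 : ℝ)) t‖ ≤ (1 : NNReal) := by
    simpa using norm_indicator_le_norm_self (fun _ => (1 : ℝ)) t
  obtain rfl : u = doublePrimitive (Ω.indicator fun _ => (1 : ℝ)) 0 := hu
  have hderiv := deriv_deriv_doublePrimitive_ae_eq hloc 0
  have hlittle := doublePrimitive_indicator_isLittleO_sq hΩ hd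
  refine ⟨fun t => (hasDerivAt_doublePrimitive hloc 0 t).differentiableAt, ?_, hderiv,
    eventuallyEq_indicator_support hderiv, hlittle, ?_⟩
  · rw [deriv_doublePrimitive hloc]
    exact lipschitzWith_primitive hloc hle 0
  · have hpow : doublePrimitive (Ω.indicator fun _ => (1 : ℝ)) 0 =o[𝓝 0] fun t => ‖t - 0‖ ^ 2 := by
      simpa using hlittle
    simpa only [Real.closedBall_eq_Icc, zero_sub, zero_add, Real.norm_eq_abs] using
      not_exists_forall_exists_closedBall_le_of_isLittleO_pow hpow

/-- **Failure of non-degeneracy in one dimension** (Section 3.1 of Figalli–Shahgholian).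
There is an open set `Ω ⊆ ℝ`, a countable union of disjoint open intervals accumulating at
`0` (so `0 ∈ ∂Ω`), whose density in `(-r,r)` tends to `0`; and for any such `Ω` the function
`u(t) = ∫₀ᵗ∫₀ˢ χ_Ω(τ) dτ ds` is `C^{1,1}`, satisfies `u'' = χ_Ω = χ_{u'' ≠ 0}` a.e., and
`u(r) = o(r²)`, so quadratic non-degeneracy fails at the free boundary point `0`. -/
theorem one_dim_nondegeneracy_fails :
    (∃ Ω : Set ℝ, IsOpen Ω ∧ IsUnionOfDisjointIntervals Ω ∧ 0 ∈ frontier Ω ∧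
      VanishingDensityAtZero Ω) ∧
    ∀ Ω : Set ℝ, IsOpen Ω → IsUnionOfDisjointIntervals Ω → 0 ∈ frontier Ω →
      VanishingDensityAtZero Ω →
      ∀ u : ℝ → ℝ,
        (u = fun t => ∫ s in (0:ℝ)..t, ∫ τ in (0:ℝ)..s, Ω.indicator (fun _ => (1:ℝ)) τ) →
        Differentiable ℝ u ∧
        LipschitzWith 1 (deriv u) ∧
        (∀ᵐ t : ℝ, deriv (deriv u) t = Ω.indicator (fun _ => (1:ℝ)) t) ∧
        (∀ᵐ t : ℝ, deriv (deriv u) t =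
          Set.indicator {s : ℝ | deriv (deriv u) s ≠ 0} (fun _ => (1:ℝ)) t) ∧
        (u =o[𝓝 0] fun r : ℝ => r ^ 2) ∧
        ¬ ∃ c : ℝ, 0 < c ∧ ∃ r0 : ℝ, 0 < r0 ∧
            ∀ r : ℝ, 0 < r → r < r0 → ∃ t ∈ Set.Icc (-r) r, c * r ^ 2 ≤ |u t| :=
  ⟨one_dim_nondegeneracy_fails_general.1, fun Ω hΩ _ _ =>
    one_dim_nondegeneracy_fails_general.2 Ω hΩ.measurableSet⟩
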